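/- arXiv:0803.3119 — 2 statements merged into one kernel-verified Lean document; each statement's English description precedes it below -/
import Mathlib

section
/- The real number 2^√2 (the real power of 2 with exponent √2) is transcendental over ℚ. -/
/-!
This is Schneider's method with Laurent's interpolation determinants. Suppose `a`, `b` and
`c = a ^ b` are algebraic, with `b` irrational, and consider the determinant of the functions
`x ^ k * a ^ (l * x)`, for `k < n ^ 3` and `l < n`, at `N = n ^ 4` points `μ + ν * b`, where
`μ, ν < n ^ 2`.

* It is nonzero: by Rolle's theorem, a nonzero real exponential polynomial has fewer zeros than
  coefficients.
* It is small: expanding the functions in power series at `0`, only products of distinct powers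
  survive in the determinant, and these have total degree at least `N.choose 2`. Comparing with a
  disc of twice the radius gains a factor `2 ^ -N.choose 2`, of the order of `2 ^ (-n ^ 8 / 2)`.
* It is not that small: its entries lie in `ℚ(a, b, c)` and the size of its conjugates and its
  denominator are at most `n ^ O(n ^ 7)`, so `n ^ -O(n ^ 7)` is a lower bound by Liouville's
  inequality.
-/

open Filter Polynomial Topology

section ExponentialPolynomials

theorem exists_finset_card_le_forall_deriv_eq_zero {f f' : ℝ → ℝ}
    (hf : ∀ x, HasDerivAt f (f' x) x) {Z : Finset ℝ} (hZ : ∀ z ∈ Z, f z = 0) :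
    ∃ Z' : Finset ℝ, Z.card ≤ Z'.card + 1 ∧ ∀ z ∈ Z', f' z = 0 := by
  have rolle (p : ℝ × ℝ) (hp : p ∈ (Z ×ˢ Z).filter fun p => p.1 < p.2) :
      ∃ c ∈ Set.Ioo p.1 p.2, f' c = 0 := by
    simp only [Finset.mem_filter, Finset.mem_product] at hp
    exact exists_hasDerivAt_eq_zero hp.2 (fun t _ => (hf t).continuousAt.continuousWithinAt)
      ((hZ _ hp.1.1).trans (hZ _ hp.1.2).symm) fun t _ => hf t
  choose c hc hc' using rolle
  refine ⟨((Z ×ˢ Z).filter fun p => p.1 < p.2).attach.image fun p => c p.1 p.2, ?_, ?_⟩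
  · refine Finset.card_le_of_interleaved fun x hx y hy hxy _ => ?_
    have hmem : (x, y) ∈ (Z ×ˢ Z).filter fun p => p.1 < p.2 := by simp [hx, hy, hxy]
    exact ⟨c _ hmem, Finset.mem_image_of_mem (fun p => c p.1 p.2) (Finset.mem_attach _ ⟨_, hmem⟩),
      hc _ hmem⟩
  · simp only [Finset.forall_mem_image]
    exact fun p _ => hc' p.1 p.2

/-- The polynomial factor `P' + w P` of the derivative of `P(x) e ^ (w x)`. -/
noncomputable def twistedDerivative {R : Type*} [CommSemiring R] (w : R) (P : R[X]) : R[X] :=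
  derivative P + C w * P

theorem twistedDerivative_zero_left {R : Type*} [CommSemiring R] (P : R[X]) :
    twistedDerivative 0 P = derivative P := by
  simp [twistedDerivative]

theorem degree_derivative_lt_of_degree_lt_succ {R : Type*} [Semiring R] {P : R[X]} {n : ℕ}
    (hP : P.degree < (n + 1 : ℕ)) : (derivative P).degree < n := by
  rw [degree_lt_iff_coeff_zero] at hP ⊢
  intro k hk
  rw [coeff_derivative, hP (k + 1) (by omega), zero_mul]

theorem degree_twistedDerivative_lt {R : Type*} [CommSemiring R] {P : R[X]} {n : ℕ}
    (hP : P.degree < n) (w : R) : (twistedDerivative w P).degree < n := by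
  rw [degree_lt_iff_coeff_zero] at hP ⊢
  intro k hk
  rw [twistedDerivative, coeff_add, coeff_derivative, coeff_C_mul, hP k hk, hP (k + 1) (by omega),
    zero_mul, mul_zero, add_zero]

theorem eq_zero_of_twistedDerivative_eq_zero {R : Type*} [CommRing R] [NoZeroDivisors R] {w : R}
    (hw : w ≠ 0) {P : R[X]} (hP : twistedDerivative w P = 0) : P = 0 := by
  by_contra hP0
  have hlt := degree_derivative_lt hP0
  rw [eq_neg_of_add_eq_zero_left hP, degree_neg, degree_C_mul hw] at hlt
  exact hlt.false

variable {ι : Type*} [Fintype ι]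

/-- The exponential polynomial `∑ i, P i (x) e ^ (w i x)`, a function of the real variable `x`. -/
noncomputable def expPoly (P : ι → ℝ[X]) (w : ι → ℝ) (x : ℝ) : ℝ :=
  ∑ i, (P i).eval x * Real.exp (w i * x)

theorem hasDerivAt_expPoly (P : ι → ℝ[X]) (w : ι → ℝ) (x : ℝ) :
    HasDerivAt (expPoly P w) (expPoly (fun i => twistedDerivative (w i) (P i)) w x) x := by
  refine HasDerivAt.fun_sum fun i _ => ?_
  have hexp : HasDerivAt (fun x => Real.exp (w i * x)) (Real.exp (w i * x) * (w i * 1)) x :=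
    ((hasDerivAt_id x).const_mul (w i)).exp
  refine (((P i).hasDerivAt x).mul hexp).congr_deriv ?_
  simp only [twistedDerivative, eval_add, eval_mul, eval_C]
  ring

theorem expPoly_sub_const (P : ι → ℝ[X]) (w : ι → ℝ) (c x : ℝ) :
    expPoly P (fun i => w i - c) x = expPoly P w x * Real.exp (-(c * x)) := by
  simp only [expPoly, Finset.sum_mul, mul_assoc, ← Real.exp_add, sub_mul, ← sub_eq_add_neg]

theorem eq_zero_of_forall_twistedDerivative_eq_zero {P : ι → ℝ[X]} {w : ι → ℝ}
    (hw : Function.Injective w) {i₀ : ι} (hi₀ : w i₀ = 0)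
    (hP : ∀ i, twistedDerivative (w i) (P i) = 0) {z : ℝ} (hz : expPoly P w z = 0) (i : ι) :
    P i = 0 := by
  have hne : ∀ i ≠ i₀, P i = 0 := fun i hi =>
    eq_zero_of_twistedDerivative_eq_zero (hi₀ ▸ hw.ne hi) (hP i)
  have hconst : P i₀ = C ((P i₀).coeff 0) := by
    refine eq_C_of_natDegree_eq_zero (derivative_eq_zero.mp ?_)
    rw [← twistedDerivative_zero_left, ← hi₀, hP]
  have hcoeff : (P i₀).coeff 0 = 0 := by
    rw [expPoly, Fintype.sum_eq_single i₀ fun i hi => by simp [hne i hi], hi₀, hconst] at hz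
    simpa using hz
  rcases eq_or_ne i i₀ with rfl | hi
  · rw [hconst, hcoeff, C_0]
  · exact hne i hi

/-- The induction normalizes one exponent to `0`: differentiating then lowers the degree of the
corresponding coefficient without raising the others, at the cost of one zero. -/
theorem eq_zero_of_expPoly_eq_zero {w : ι → ℝ} (hw : Function.Injective w) {P : ι → ℝ[X]}
    {d : ι → ℕ} (hP : ∀ i, (P i).degree < d i) {Z : Finset ℝ} (hcard : ∑ i, d i ≤ Z.card)
    (hZ : ∀ z ∈ Z, expPoly P w z = 0) (i : ι) : P i = 0 := by
  classical
  induction hN : ∑ i, d i generalizing d P w Z i with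
  | zero => simpa [Finset.sum_eq_zero_iff.mp hN i (Finset.mem_univ i)] using hP i
  | succ N ih =>
    obtain ⟨i₀, -, hi₀⟩ := Finset.exists_ne_zero_of_sum_ne_zero (hN.trans_ne N.succ_ne_zero)
    have hw₀ : Function.Injective fun i => w i - w i₀ := sub_left_injective.comp hw
    have hZ₀ : ∀ z ∈ Z, expPoly P (fun i => w i - w i₀) z = 0 := fun z hz => by
      rw [expPoly_sub_const, hZ z hz, zero_mul]
    obtain ⟨Z', hZZ', hZ'⟩ :=
      exists_finset_card_le_forall_deriv_eq_zero (hasDerivAt_expPoly P _) hZ₀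
    have hdeg (i : ι) : (twistedDerivative (w i - w i₀) (P i)).degree <
        (Function.update d i₀ (d i₀ - 1) i : ℕ) := by
      rcases eq_or_ne i i₀ with rfl | hi
      · rw [sub_self, twistedDerivative_zero_left, Function.update_self]
        refine degree_derivative_lt_of_degree_lt_succ ?_
        rw [Nat.sub_add_cancel (Nat.pos_of_ne_zero hi₀)]
        exact hP i
      · rw [Function.update_of_ne hi]
        exact degree_twistedDerivative_lt (hP i) _
    have hsum : ∑ i, Function.update d i₀ (d i₀ - 1) i = N := by
      rw [Finset.sum_update_of_mem (Finset.mem_univ i₀)]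
      rw [← Finset.add_sum_erase _ _ (Finset.mem_univ i₀), Finset.erase_eq] at hN
      omega
    have htwisted (i : ι) : twistedDerivative (w i - w i₀) (P i) = 0 :=
      ih hw₀ hdeg (by omega) hZ' i hsum
    obtain ⟨z, hz⟩ : Z.Nonempty := Finset.card_pos.mp (by omega)
    exact eq_zero_of_forall_twistedDerivative_eq_zero hw₀ (sub_self _) htwisted (hZ₀ z hz) i

end ExponentialPolynomials

section InterpolationDeterminants

variable {ι : Type*} [Fintype ι]

theorem choose_two_card_le_sum_of_injective {k : ι → ℕ} (hk : Function.Injective k) :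
    (Fintype.card ι).choose 2 ≤ ∑ i, k i := by
  let k' : ι ↪ ℤ := ⟨fun i => k i, Nat.cast_injective.comp hk⟩
  have hle := Finset.sum_range_le_sum (s := Finset.univ.map k') (c := 0) (by simp [k'])
  rw [Finset.card_map, Finset.card_univ, Finset.sum_map] at hle
  rw [Nat.choose_two_right, ← Finset.sum_range_id]
  zify
  simpa [k'] using hle

variable [DecidableEq ι] {𝕜 : Type*} [NormedField 𝕜]

theorem norm_det_le_factorial_mul_prod {A : Matrix ι ι 𝕜} {B : ι → ℝ} (hA : ∀ i j, ‖A i j‖ ≤ B i) :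
    ‖A.det‖ ≤ (Fintype.card ι).factorial * ∏ i, B i := by
  rw [← Matrix.det_transpose, Matrix.det_apply]
  refine (norm_sum_le_of_le (n := fun _ => ∏ i, B i) _ fun σ _ => ?_).trans_eq ?_
  · have hsign : ‖Equiv.Perm.sign σ • ∏ i, A.transpose (σ i) i‖ = ‖∏ i, A i (σ i)‖ := by
      rcases Int.units_eq_one_or (Equiv.Perm.sign σ) with h | h <;> simp [h]
    rw [hsign, norm_prod]
    exact Finset.prod_le_prod (fun _ _ => norm_nonneg _) fun i _ => hA i _
  · rw [Finset.sum_const, Finset.card_univ, Fintype.card_perm, nsmul_eq_mul]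

theorem norm_det_pow_le (k : ι → ℕ) {x : ι → 𝕜} {X R : ℝ} (hR : 1 ≤ R) (hX : 0 ≤ X)
    (hx : ∀ j, ‖x j‖ ≤ X) :
    ‖(Matrix.of fun i j => x j ^ k i).det‖ ≤ (Fintype.card ι).factorial *
      (R ^ (Fintype.card ι).choose 2)⁻¹ * ∏ i, (R * X) ^ k i := by
  have : 0 < R := zero_lt_one.trans_le hR
  by_cases hk : Function.Injective k
  · calc ‖(Matrix.of fun i j => x j ^ k i).det‖
        ≤ (Fintype.card ι).factorial * ∏ i, X ^ k i :=
          norm_det_le_factorial_mul_prod fun i j => by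
            rw [Matrix.of_apply, norm_pow]
            exact pow_le_pow_left₀ (norm_nonneg _) (hx j) _
      _ ≤ (Fintype.card ι).factorial *
          ((R ^ (Fintype.card ι).choose 2)⁻¹ * R ^ (∑ i, k i) * ∏ i, X ^ k i) := by
          gcongr
          refine le_mul_of_one_le_left (Finset.prod_nonneg fun i _ => by positivity) ?_
          rw [inv_mul_eq_div, one_le_div (by positivity)]
          exact pow_le_pow_right₀ hR (choose_two_card_le_sum_of_injective hk)
      _ = _ := by
          simp only [mul_pow, Finset.prod_mul_distrib, Finset.prod_pow_eq_pow_sum, mul_assoc]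
  · simp only [Function.Injective, not_forall] at hk
    obtain ⟨a, b, hab, hne⟩ := hk
    rw [Matrix.det_zero_of_row_eq hne (by ext j; simp [hab]), norm_zero]
    positivity

theorem det_sum_mul_pow (p : ι → ℕ → 𝕜) (x : ι → 𝕜) (s : Finset ℕ) :
    (Matrix.of fun i j => ∑ n ∈ s, p i n * x j ^ n).det =
      ∑ k ∈ Fintype.piFinset fun _ : ι => s,
        (∏ i, p i (k i)) * (Matrix.of fun i j => x j ^ k i).det := by
  have hrows : (Matrix.of fun i j => ∑ n ∈ s, p i n * x j ^ n) =
      fun i => ∑ n ∈ s, fun j => p i n * x j ^ n := by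
    ext i j
    simp
  rw [hrows]
  exact (Matrix.detRowAlternating.toMultilinearMap.map_sum_finset _ _).trans
    (Finset.sum_congr rfl fun k _ => Matrix.det_mul_column (fun i => p i (k i)) _)

theorem norm_det_sum_mul_pow_le (p : ι → ℕ → 𝕜) {x : ι → 𝕜} {X R : ℝ} (hR : 1 ≤ R) (hX : 0 ≤ X)
    (hx : ∀ j, ‖x j‖ ≤ X) (s : Finset ℕ) :
    ‖(Matrix.of fun i j => ∑ n ∈ s, p i n * x j ^ n).det‖ ≤ (Fintype.card ι).factorial *
      (R ^ (Fintype.card ι).choose 2)⁻¹ * ∏ i, ∑ n ∈ s, ‖p i n‖ * (R * X) ^ n := by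
  rw [det_sum_mul_pow, Finset.prod_univ_sum, Finset.mul_sum]
  refine norm_sum_le_of_le _ fun k _ => ?_
  rw [norm_mul, norm_prod, Finset.prod_mul_distrib, mul_left_comm]
  gcongr
  exact norm_det_pow_le k hR hX hx

/-- Only the terms `∏ i, x (σ i) ^ k i` with `k` injective survive in the expansion of the
determinant, and these have degree at least `(card ι).choose 2`: enlarging the disc by the factor
`R` therefore gains `R ^ (card ι).choose 2`. -/
theorem norm_det_le_of_hasSum {p : ι → ℕ → 𝕜} {x : ι → 𝕜} {A : Matrix ι ι 𝕜}
    (hA : ∀ i j, HasSum (fun n => p i n * x j ^ n) (A i j)) {X R : ℝ} (hR : 1 ≤ R) (hX : 0 ≤ X)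
    (hx : ∀ j, ‖x j‖ ≤ X) {B : ι → ℝ} (hB : ∀ i, HasSum (fun n => ‖p i n‖ * (R * X) ^ n) (B i)) :
    ‖A.det‖ ≤ (Fintype.card ι).factorial * (R ^ (Fintype.card ι).choose 2)⁻¹ * ∏ i, B i := by
  have hlim : Tendsto
      (fun N => ‖(Matrix.of fun i j => ∑ n ∈ Finset.range N, p i n * x j ^ n).det‖)
      atTop (𝓝 ‖A.det‖) :=
    (continuous_id.matrix_det.norm.tendsto A).comp <|
      tendsto_pi_nhds.mpr fun i => tendsto_pi_nhds.mpr fun j => (hA i j).tendsto_sum_nat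
  have hnonneg (i : ι) (n : ℕ) : 0 ≤ ‖p i n‖ * (R * X) ^ n := by positivity
  refine le_of_tendsto' hlim fun N => (norm_det_sum_mul_pow_le p hR hX hx _).trans ?_
  gcongr with i
  exact sum_le_hasSum _ (fun n _ => hnonneg i n) (hB i)

end InterpolationDeterminants

section ExponentialPolynomialMatrices

/-- The Taylor coefficients at `0` of the function `x ^ k * e ^ (w x)`. -/
noncomputable def powMulExpCoeff (k : ℕ) (w : ℝ) (n : ℕ) : ℝ :=
  if k ≤ n then w ^ (n - k) / (n - k).factorial else 0

theorem norm_powMulExpCoeff (k : ℕ) (w : ℝ) (n : ℕ) :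
    ‖powMulExpCoeff k w n‖ = powMulExpCoeff k |w| n := by
  unfold powMulExpCoeff
  split_ifs <;> simp

theorem hasSum_powMulExpCoeff (k : ℕ) (w y : ℝ) :
    HasSum (fun n => powMulExpCoeff k w n * y ^ n) (y ^ k * Real.exp (w * y)) := by
  have hexp : HasSum (fun n => y ^ k * ((w * y) ^ n / n.factorial)) (y ^ k * Real.exp (w * y)) := by
    rw [Real.exp_eq_exp_ℝ]
    exact (NormedSpace.expSeries_div_hasSum_exp (w * y)).mul_left _
  refine ((add_left_injective k).hasSum_iff fun n hn => ?_).mp (hexp.congr_fun fun n => ?_)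
  · have hnk : ¬ k ≤ n := fun h => hn ⟨n - k, Nat.sub_add_cancel h⟩
    rw [powMulExpCoeff, if_neg hnk, zero_mul]
  · simp only [Function.comp, powMulExpCoeff, Nat.le_add_left, if_true, Nat.add_sub_cancel]
    ring

/-- The matrix of the functions `x ^ k * e ^ (w l x)`, `k < d`, evaluated at the points `x j`. Rows
are indexed by the pairs `(k, l)`, and so are the points, to make the matrix square. -/
noncomputable def expPolyMatrix {κ : Type*} (d : ℕ) (w : κ → ℝ) (x : Fin d × κ → ℝ) :
    Matrix (Fin d × κ) (Fin d × κ) ℝ :=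
  Matrix.of fun i j => x j ^ (i.1 : ℕ) * Real.exp (w i.2 * x j)

variable {κ : Type*} [Fintype κ] {d : ℕ} {w : κ → ℝ} {x : Fin d × κ → ℝ}

theorem vecMul_expPolyMatrix (v : Fin d × κ → ℝ) (w : κ → ℝ) (x : Fin d × κ → ℝ)
    (j : Fin d × κ) : Matrix.vecMul v (expPolyMatrix d w x) j =
      expPoly (fun l => ∑ k : Fin d, C (v (k, l)) * X ^ (k : ℕ)) w (x j) := by
  simp [Matrix.vecMul, dotProduct, expPolyMatrix, expPoly, eval_finsetSum,
    Fintype.sum_prod_type_right, Finset.sum_mul, mul_assoc]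

variable [DecidableEq κ]

theorem det_expPolyMatrix_ne_zero (hw : Function.Injective w) (hx : Function.Injective x) :
    (expPolyMatrix d w x).det ≠ 0 := by
  intro hdet
  obtain ⟨v, hv, hvM⟩ := Matrix.exists_vecMul_eq_zero_iff.mpr hdet
  have hP := eq_zero_of_expPoly_eq_zero hw (Z := Finset.univ.image x)
    (fun l => degree_sum_fin_lt fun k => v (k, l))
    (by simp [Finset.card_image_of_injective _ hx, mul_comm])
    (Finset.forall_mem_image.mpr fun j _ => by rw [← vecMul_expPolyMatrix, hvM, Pi.zero_apply])
  refine hv (funext fun i => ?_)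
  simpa [finsetSum_coeff, coeff_X_pow, Fin.val_inj] using congrArg (coeff · i.1) (hP i.2)

theorem abs_det_expPolyMatrix_le {X R W : ℝ} (hR : 1 ≤ R) (hX : 0 ≤ X) (hRX : 1 ≤ R * X)
    (hx : ∀ j, |x j| ≤ X) (hw : ∀ l, |w l| ≤ W) :
    |(expPolyMatrix d w x).det| ≤ (Fintype.card (Fin d × κ)).factorial *
      (R ^ (Fintype.card (Fin d × κ)).choose 2)⁻¹ *
        ((R * X) ^ d * Real.exp (W * (R * X))) ^ Fintype.card (Fin d × κ) := by
  have hmajorant (i : Fin d × κ) :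
      HasSum (fun n => ‖powMulExpCoeff i.1 (w i.2) n‖ * (R * X) ^ n)
        ((R * X) ^ (i.1 : ℕ) * Real.exp (|w i.2| * (R * X))) := by
    simpa only [norm_powMulExpCoeff] using hasSum_powMulExpCoeff i.1 |w i.2| (R * X)
  refine (norm_det_le_of_hasSum (A := expPolyMatrix d w x)
    (fun i j => hasSum_powMulExpCoeff i.1 (w i.2) (x j)) hR hX hx hmajorant).trans ?_
  refine mul_le_mul_of_nonneg_left ?_ (by positivity)
  rw [← Finset.card_univ, ← Finset.prod_const]
  refine Finset.prod_le_prod (fun i _ => by positivity) fun i _ => ?_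
  gcongr
  · exact i.1.2.le
  · exact hw i.2

end ExponentialPolynomialMatrices

section Liouville

open NumberField

variable {K : Type*} [Field K] [NumberField K]

theorem one_le_norm_mul_house_pow {x : K} (hx : IsIntegral ℤ x) (hx0 : x ≠ 0) (φ : K →+* ℂ) :
    1 ≤ ‖φ x‖ * house x ^ (Module.finrank ℚ K - 1) := by
  refine le_trans ?_ (norm_norm_le_norm_mul_house_pow x φ)
  obtain ⟨z, hz⟩ := IsIntegrallyClosed.isIntegral_iff.mp (Algebra.isIntegral_norm ℚ hx)
  have hz0 : z ≠ 0 := by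
    rintro rfl
    exact Algebra.norm_ne_zero_iff.mpr hx0 (hz.symm.trans (map_zero _))
  rw [← hz, eq_intCast, Int.norm_cast_rat, Int.norm_eq_abs]
  exact_mod_cast Int.one_le_abs hz0

variable {ι : Type*} [Fintype ι] [DecidableEq ι] {M : Matrix ι ι K} {B : ℝ}

theorem house_det_le (hB₀ : 0 ≤ B) (hB : ∀ i j, house (M i j) ≤ B) :
    house M.det ≤ (Fintype.card ι).factorial * B ^ Fintype.card ι := by
  rw [house, pi_norm_le_iff_of_nonneg (by positivity)]
  intro φ
  have hdet := norm_det_le_factorial_mul_prod (A := M.map φ) (B := fun _ => B)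
    fun i j => (norm_embedding_le_house _ φ).trans (hB i j)
  rwa [Finset.prod_const, Finset.card_univ, ← RingHom.mapMatrix_apply, ← RingHom.map_det] at hdet

theorem one_le_norm_det_mul_pow {q : ℤ} (hq : q ≠ 0) (hM : ∀ i j, IsIntegral ℤ (q * M i j))
    (hdet : M.det ≠ 0) (hB₀ : 0 ≤ B) (hB : ∀ i j, house (M i j) ≤ B) (φ : K →+* ℂ) :
    1 ≤ |(q : ℝ)| ^ Fintype.card ι * ‖φ M.det‖ *
      ((Fintype.card ι).factorial * (|(q : ℝ)| * B) ^ Fintype.card ι) ^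
        (Module.finrank ℚ K - 1) := by
  have hsmul : ((q : K) • M).det = (q : K) ^ Fintype.card ι * M.det := Matrix.det_smul _ _
  have hhouse (i j : ι) : house (((q : K) • M) i j) ≤ |(q : ℝ)| * B := by
    refine (house_mul_le _ _).trans ?_
    rw [house_intCast, Int.cast_abs]
    exact mul_le_mul_of_nonneg_left (hB i j) (abs_nonneg _)
  have hliouville := one_le_norm_mul_house_pow (IsIntegral.det (M := (q : K) • M) hM)
    (hsmul ▸ mul_ne_zero (pow_ne_zero _ (Int.cast_ne_zero.mpr hq)) hdet) φ
  refine hliouville.trans ?_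
  have hnorm : ‖φ ((q : K) • M).det‖ = |(q : ℝ)| ^ Fintype.card ι * ‖φ M.det‖ := by
    rw [hsmul, map_mul, map_pow, map_intCast, norm_mul, norm_pow, Complex.norm_intCast]
  rw [hnorm]
  gcongr
  exacts [house_nonneg _, house_det_le (by positivity) hhouse]

end Liouville

section Schneider

open NumberField

/-- The matrix with entries `(μ + ν b) ^ k (a ^ μ c ^ ν) ^ l`, with rows indexed by `(k, l)` and
columns by the points `(μ, ν) = p j`. For `c = a ^ b` the entries are the values of the functions
`x ^ k a ^ (l x)` at the points `μ + ν b`. -/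
def schneiderMatrix {R : Type*} [Semiring R] {d n : ℕ} (a b c : R) (p : Fin d × Fin n → ℕ × ℕ) :
    Matrix (Fin d × Fin n) (Fin d × Fin n) R :=
  Matrix.of fun i j =>
    ((p j).1 + (p j).2 * b) ^ (i.1 : ℕ) * (a ^ (i.2 * (p j).1) * c ^ (i.2 * (p j).2))

variable {d n H : ℕ} {p : Fin d × Fin n → ℕ × ℕ}

theorem schneiderMatrix_map {R S : Type*} [Semiring R] [Semiring S] (f : R →+* S) (a b c : R)
    (p : Fin d × Fin n → ℕ × ℕ) :
    (schneiderMatrix a b c p).map f = schneiderMatrix (f a) (f b) (f c) p := by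
  ext i j
  simp [schneiderMatrix]

theorem schneiderMatrix_eq_expPolyMatrix {α : ℝ} (hα : 0 < α) (β : ℝ)
    (p : Fin d × Fin n → ℕ × ℕ) : schneiderMatrix α β (α ^ β) p =
      expPolyMatrix d (fun l : Fin n => l * Real.log α) fun j => (p j).1 + (p j).2 * β := by
  ext i j
  simp only [schneiderMatrix, expPolyMatrix, Matrix.of_apply]
  rw [← Real.rpow_natCast α, ← Real.rpow_mul_natCast hα.le, ← Real.rpow_add hα,
    Real.rpow_def_of_pos hα]
  push_cast
  ring_nf

theorem injective_natCast_add_natCast_mul {β : ℝ} (hβ : Irrational β) :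
    Function.Injective fun q : ℕ × ℕ => (q.1 + q.2 * β : ℝ) := by
  rintro ⟨μ, ν⟩ ⟨μ', ν'⟩ h
  have hlin : ((ν - ν' : ℤ) : ℝ) * β = ((μ' - μ : ℤ) : ℝ) := by
    push_cast
    linear_combination h
  have hν : (ν - ν' : ℤ) = 0 := by
    by_contra hne
    exact (hβ.intCast_mul hne).ne_int _ hlin
  rw [hν, Int.cast_zero, zero_mul, eq_comm, Int.cast_eq_zero] at hlin
  simp only [Prod.mk.injEq]
  omega

theorem det_schneiderMatrix_ne_zero {α β : ℝ} (hα : 0 < α) (hα₁ : α ≠ 1) (hβ : Irrational β)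
    (hp : Function.Injective p) : (schneiderMatrix α β (α ^ β) p).det ≠ 0 := by
  rw [schneiderMatrix_eq_expPolyMatrix hα]
  exact det_expPolyMatrix_ne_zero
    ((mul_left_injective₀ (Real.log_ne_zero_of_pos_of_ne_one hα hα₁)).comp
      (Nat.cast_injective.comp Fin.val_injective))
    ((injective_natCast_add_natCast_mul hβ).comp hp)

theorem abs_det_schneiderMatrix_le {α β A : ℝ} (hα : 0 < α) (hA : 1 ≤ A) (hβA : |β| ≤ A)
    (hαA : |Real.log α| ≤ A) (hH : 1 ≤ H) (hp : ∀ j, p j ≤ (H, H)) (hd : n * H ≤ d) :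
    |(schneiderMatrix α β (α ^ β) p).det| ≤ (Fintype.card (Fin d × Fin n)).factorial *
      (2 ^ (Fintype.card (Fin d × Fin n)).choose 2)⁻¹ *
        ((4 * A * Real.exp (4 * A ^ 2) * H) ^ d) ^ Fintype.card (Fin d × Fin n) := by
  have hH' : (1 : ℝ) ≤ H := by exact_mod_cast hH
  have hAH : 1 ≤ A * H := one_le_mul_of_one_le_of_one_le hA hH'
  have hx (j : Fin d × Fin n) : |((p j).1 + (p j).2 * β : ℝ)| ≤ 2 * A * H := by
    have h₁ : ((p j).1 : ℝ) ≤ H := by exact_mod_cast (hp j).1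
    have h₂ : ((p j).2 : ℝ) ≤ H := by exact_mod_cast (hp j).2
    calc |((p j).1 + (p j).2 * β : ℝ)| ≤ (p j).1 + (p j).2 * |β| := by
          simpa [abs_mul] using abs_add_le ((p j).1 : ℝ) ((p j).2 * β)
      _ ≤ H + H * A := by gcongr
      _ ≤ 2 * A * H := by nlinarith
  have hw (l : Fin n) : |(l * Real.log α : ℝ)| ≤ n * A := by
    rw [abs_mul, Nat.abs_cast]
    gcongr
    exact l.2.le
  rw [schneiderMatrix_eq_expPolyMatrix hα]
  refine (abs_det_expPolyMatrix_le one_le_two (by positivity) (by linarith) hx hw).trans ?_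
  have hexp : Real.exp (n * A * (2 * (2 * A * H))) ≤ Real.exp (4 * A ^ 2) ^ d := by
    have hd' : (n * H : ℝ) ≤ d := by exact_mod_cast hd
    rw [← Real.exp_nat_mul, Real.exp_le_exp]
    calc n * A * (2 * (2 * A * H)) = n * H * (4 * A ^ 2) := by ring
      _ ≤ d * (4 * A ^ 2) := by gcongr
  have hbase : 2 * (2 * A * H) = 4 * A * H := by ring
  rw [hbase] at hexp ⊢
  rw [mul_right_comm (4 * A), mul_pow (4 * A * H)]
  gcongr

theorem isIntegral_pow_mul_pow {R : Type*} [CommRing R] {q : ℤ} {x : R}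
    (hx : IsIntegral ℤ (q * x)) {k m : ℕ} (hk : k ≤ m) : IsIntegral ℤ ((q : R) ^ m * x ^ k) := by
  obtain ⟨t, rfl⟩ := Nat.exists_eq_add_of_le hk
  rw [pow_add, mul_right_comm, ← mul_pow]
  exact (hx.pow k).mul ((isIntegral_intCast q).pow t)

theorem isIntegral_pow_mul_schneiderMatrix {R : Type*} [CommRing R] {a b c : R} {q : ℤ}
    (ha : IsIntegral ℤ (q * a)) (hb : IsIntegral ℤ (q * b)) (hc : IsIntegral ℤ (q * c))
    (hp : ∀ j, p j ≤ (H, H)) (hd : n * H ≤ d) (i j : Fin d × Fin n) :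
    IsIntegral ℤ (((q ^ (3 * d) : ℤ) : R) * schneiderMatrix a b c p i j) := by
  have hpoint : IsIntegral ℤ ((q : R) * ((p j).1 + (p j).2 * b)) := by
    rw [mul_add, mul_left_comm]
    exact ((isIntegral_intCast q).mul (isIntegral_natCast _)).add
      ((isIntegral_natCast _).mul hb)
  have h := (isIntegral_pow_mul_pow hpoint i.1.2.le).mul
    ((isIntegral_pow_mul_pow ha ((Nat.mul_le_mul i.2.2.le (hp j).1).trans hd)).mul
      (isIntegral_pow_mul_pow hc ((Nat.mul_le_mul i.2.2.le (hp j).2).trans hd)))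
  convert h using 1
  simp only [schneiderMatrix, Matrix.of_apply]
  push_cast
  ring

theorem house_schneiderMatrix_le {K : Type*} [Field K] [NumberField K] {a b c : K} {A : ℝ}
    (hA : 1 ≤ A) (ha : house a ≤ A) (hb : house b ≤ A) (hc : house c ≤ A) (hH : 1 ≤ H)
    (hp : ∀ j, p j ≤ (H, H)) (hd : n * H ≤ d) (i j : Fin d × Fin n) :
    house (schneiderMatrix a b c p i j) ≤ (2 * A ^ 3 * H) ^ d := by
  have hH' : (1 : ℝ) ≤ H := by exact_mod_cast hH
  have hAH : 1 ≤ A * H := one_le_mul_of_one_le_of_one_le hA hH'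
  have hpow {x : K} {B : ℝ} (hB : 1 ≤ B) (hx : house x ≤ B) {k : ℕ} (hk : k ≤ d) :
      house (x ^ k) ≤ B ^ d :=
    (house_pow_le x k).trans ((pow_le_pow_left₀ (house_nonneg x) hx k).trans
      (pow_le_pow_right₀ hB hk))
  have hcast (m : ℕ) : house (m : K) = m := by simpa using house_intCast (K := K) m
  have hpoint : house ((p j).1 + (p j).2 * b : K) ≤ 2 * A * H := by
    have h₁ : ((p j).1 : ℝ) ≤ H := by exact_mod_cast (hp j).1
    have h₂ : ((p j).2 : ℝ) ≤ H := by exact_mod_cast (hp j).2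
    calc house ((p j).1 + (p j).2 * b : K) ≤ (p j).1 + (p j).2 * house b := by
          simpa [house_nat_mul, hcast] using house_add_le ((p j).1 : K) ((p j).2 * b)
      _ ≤ H + H * A := by
          gcongr
          exact house_nonneg b
      _ ≤ 2 * A * H := by nlinarith
  calc house (schneiderMatrix a b c p i j)
      ≤ house (((p j).1 + (p j).2 * b : K) ^ (i.1 : ℕ)) *
          (house (a ^ (i.2 * (p j).1 : ℕ)) * house (c ^ (i.2 * (p j).2 : ℕ))) :=
        (house_mul_le _ _).trans
          (mul_le_mul_of_nonneg_left (house_mul_le _ _) (house_nonneg _))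
    _ ≤ (2 * A * H) ^ d * (A ^ d * A ^ d) := by
        gcongr
        · exact mul_nonneg (house_nonneg _) (house_nonneg _)
        · exact hpow (by linarith) hpoint i.1.2.le
        · exact house_nonneg _
        · exact hpow hA ha ((Nat.mul_le_mul i.2.2.le (hp j).1).trans hd)
        · exact hpow hA hc ((Nat.mul_le_mul i.2.2.le (hp j).2).trans hd)
    _ = (2 * A ^ 3 * H) ^ d := by
        rw [← mul_pow, ← mul_pow]
        ring

theorem two_mul_pow_three_le_mul_exp {A : ℝ} (hA : 0 ≤ A) :
    2 * A ^ 3 ≤ 4 * A * Real.exp (4 * A ^ 2) := by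
  have hexp : 4 * A ^ 2 ≤ Real.exp (4 * A ^ 2) := by
    linarith [Real.add_one_le_exp (4 * A ^ 2)]
  nlinarith [mul_le_mul_of_nonneg_left hexp hA, pow_nonneg hA 3]

theorem exists_injective_forall_le {ι : Type*} [Fintype ι] {H : ℕ} (hH : Fintype.card ι ≤ H ^ 2) :
    ∃ p : ι → ℕ × ℕ, Function.Injective p ∧ ∀ j, p j ≤ (H, H) := by
  obtain ⟨e⟩ : Nonempty (ι ↪ Fin H × Fin H) :=
    Function.Embedding.nonempty_of_card_le (by simpa [sq] using hH)
  exact ⟨Prod.map Fin.val Fin.val ∘ e,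
    (Fin.val_injective.prodMap Fin.val_injective).comp e.injective,
    fun j => ⟨(e j).1.2.le, (e j).2.2.le⟩⟩

variable {K : Type*} [Field K] [NumberField K] {ψ : K →+* ℝ} {a b c : K}

theorem one_le_abs_map_det_schneiderMatrix_mul_pow {A : ℝ} {q : ℤ} (hA : 1 ≤ A)
    (haA : house a ≤ A) (hbA : house b ≤ A) (hcA : house c ≤ A) (hq : q ≠ 0)
    (hqa : IsIntegral ℤ (q * a)) (hqb : IsIntegral ℤ (q * b)) (hqc : IsIntegral ℤ (q * c))
    (hH : 1 ≤ H) (hp : ∀ j, p j ≤ (H, H)) (hd : n * H ≤ d)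
    (hdet : (schneiderMatrix a b c p).det ≠ 0) :
    1 ≤ ((|(q : ℝ)| ^ 3) ^ d) ^ Fintype.card (Fin d × Fin n) *
      |ψ (schneiderMatrix a b c p).det| *
        ((Fintype.card (Fin d × Fin n)).factorial *
          ((|(q : ℝ)| ^ 3 * (2 * A ^ 3 * H)) ^ d) ^ Fintype.card (Fin d × Fin n)) ^
            (Module.finrank ℚ K - 1) := by
  have h := one_le_norm_det_mul_pow (pow_ne_zero (3 * d) hq)
    (isIntegral_pow_mul_schneiderMatrix hqa hqb hqc hp hd) hdet (by positivity)
    (house_schneiderMatrix_le hA haA hbA hcA hH hp hd) (Complex.ofRealHom.comp ψ)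
  rwa [Int.cast_pow, abs_pow, pow_mul, ← mul_pow, RingHom.comp_apply,
    Complex.ofRealHom_eq_coe, Complex.norm_real, Real.norm_eq_abs] at h

theorem two_pow_choose_two_le_of_schneiderMatrix {A : ℝ} {q : ℤ} (ha₀ : 0 < ψ a) (ha₁ : ψ a ≠ 1)
    (hb : Irrational (ψ b)) (hc : ψ c = ψ a ^ ψ b) (hA : 1 ≤ A) (hlog : |Real.log (ψ a)| ≤ A)
    (haA : house a ≤ A) (hbA : house b ≤ A) (hcA : house c ≤ A) (hq : q ≠ 0)
    (hqa : IsIntegral ℤ (q * a)) (hqb : IsIntegral ℤ (q * b)) (hqc : IsIntegral ℤ (q * c))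
    (hH : 1 ≤ H) (hd : n * H ≤ d) (hdn : Fintype.card (Fin d × Fin n) ≤ H ^ 2) :
    (2 : ℝ) ^ (Fintype.card (Fin d × Fin n)).choose 2 ≤
      ((Fintype.card (Fin d × Fin n)).factorial *
        ((|(q : ℝ)| ^ 3 * (4 * A * Real.exp (4 * A ^ 2) * H)) ^ d) ^
          Fintype.card (Fin d × Fin n)) ^ Module.finrank ℚ K := by
  obtain ⟨p, hp, hpH⟩ := exists_injective_forall_le hdn
  have hψdet : ψ (schneiderMatrix a b c p).det =
      (schneiderMatrix (ψ a) (ψ b) (ψ a ^ ψ b) p).det := by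
    rw [RingHom.map_det, RingHom.mapMatrix_apply, schneiderMatrix_map, hc]
  have hdet : (schneiderMatrix a b c p).det ≠ 0 := fun h =>
    det_schneiderMatrix_ne_zero ha₀ ha₁ hb hp (by rw [← hψdet, h, map_zero])
  have hψb : |ψ b| ≤ A := by
    simpa using (norm_embedding_le_house b (Complex.ofRealHom.comp ψ)).trans hbA
  have hupper := abs_det_schneiderMatrix_le ha₀ hA hψb hlog hH hpH hd
  have hlower := one_le_abs_map_det_schneiderMatrix_mul_pow (ψ := ψ) hA haA hbA hcA hq hqa hqb hqc
    hH hpH hd hdet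
  rw [hψdet] at hlower
  set N := Fintype.card (Fin d × Fin n)
  set E : ℝ := 4 * A * Real.exp (4 * A ^ 2)
  set Δ : ℝ := |(schneiderMatrix (ψ a) (ψ b) (ψ a ^ ψ b) p).det|
  set M : ℝ := N.factorial * ((|(q : ℝ)| ^ 3 * (E * H)) ^ d) ^ N with hM
  have hAE : 2 * A ^ 3 ≤ E := two_mul_pow_three_le_mul_exp (by positivity)
  calc (2 : ℝ) ^ N.choose 2
      ≤ 2 ^ N.choose 2 * (((|(q : ℝ)| ^ 3) ^ d) ^ N * Δ *
          (N.factorial * ((|(q : ℝ)| ^ 3 * (2 * A ^ 3 * H)) ^ d) ^ N) ^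
            (Module.finrank ℚ K - 1)) := le_mul_of_one_le_right (by positivity) hlower
    _ ≤ 2 ^ N.choose 2 * (((|(q : ℝ)| ^ 3) ^ d) ^ N *
          (N.factorial * (2 ^ N.choose 2)⁻¹ * ((E * H) ^ d) ^ N) *
            M ^ (Module.finrank ℚ K - 1)) := by
        rw [hM]
        gcongr
    _ = M * M ^ (Module.finrank ℚ K - 1) := by
        nth_rw 2 [hM]
        rw [mul_pow _ (E * H), mul_pow _ ((E * H) ^ d)]
        field_simp
    _ = M ^ Module.finrank ℚ K := by
        rw [← pow_succ', Nat.sub_add_cancel Module.finrank_pos]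

theorem eventually_pow_lt_two_pow_sub_one (k : ℕ) :
    ∀ᶠ n : ℕ in atTop, n ^ k < 2 ^ (n - 1) := by
  have h := (tendsto_pow_const_div_const_pow_of_one_lt k (one_lt_two (α := ℝ))).eventually_lt_const
    (half_pos one_pos)
  filter_upwards [h, eventually_ge_atTop 1] with n hn hn₁
  obtain ⟨m, rfl⟩ := Nat.exists_eq_add_of_le' hn₁
  rw [div_lt_iff₀ (by positivity), pow_succ 2] at hn
  have hlt : ((m + 1 : ℕ) : ℝ) ^ k < 2 ^ m := by linarith
  exact_mod_cast hlt

theorem exists_factorial_mul_pow_lt_two_pow_choose_two {C : ℝ} (hC : 0 ≤ C) (D : ℕ) :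
    ∃ n : ℕ, 1 ≤ n ∧
      ((n ^ 4).factorial * ((C * (n ^ 2 : ℕ)) ^ n ^ 3) ^ n ^ 4) ^ D <
        (2 : ℝ) ^ (n ^ 4).choose 2 := by
  obtain ⟨n, hn, hn₁, hCn⟩ := ((eventually_pow_lt_two_pow_sub_one (14 * D)).and
    ((eventually_ge_atTop 1).and (eventually_ge_atTop ⌈C⌉₊))).exists
  refine ⟨n, hn₁, lt_of_pow_lt_pow_left₀ 2 (by positivity) ?_⟩
  have hCn' : C ≤ n := Nat.ceil_le.mp hCn
  have hfac : ((n ^ 4).factorial : ℝ) ≤ (n ^ (4 * n ^ 3)) ^ n ^ 4 := by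
    calc ((n ^ 4).factorial : ℝ) ≤ (n ^ 4) ^ n ^ 4 := by
          exact_mod_cast Nat.factorial_le_pow (n ^ 4)
      _ ≤ (n ^ (4 * n ^ 3)) ^ n ^ 4 := by
          gcongr
          · exact_mod_cast hn₁
          · exact Nat.le_mul_of_pos_right 4 (by positivity)
  have hexp : (n - 1) * n ^ 3 * n ^ 4 ≤ (n ^ 4).choose 2 * 2 := by
    rw [Nat.choose_two_right, Nat.div_mul_cancel (Nat.even_mul_pred_self _).two_dvd, mul_comm]
    gcongr
    rw [Nat.sub_mul, ← pow_succ', one_mul]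
    exact Nat.sub_le_sub_left (Nat.one_le_pow _ _ hn₁) _
  calc (((n ^ 4).factorial * ((C * (n ^ 2 : ℕ)) ^ n ^ 3) ^ n ^ 4) ^ D) ^ 2
      ≤ (((n ^ (4 * n ^ 3)) ^ n ^ 4 * ((n * (n ^ 2 : ℕ)) ^ n ^ 3) ^ n ^ 4) ^ D) ^ 2 := by gcongr
    _ = (((n : ℝ) ^ (14 * D)) ^ n ^ 3) ^ n ^ 4 := by
        push_cast
        ring
    _ < ((2 ^ (n - 1)) ^ n ^ 3) ^ n ^ 4 := by
        gcongr
        exact_mod_cast hn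
    _ ≤ (2 ^ (n ^ 4).choose 2) ^ 2 := by
        rw [← pow_mul, ← pow_mul, ← pow_mul, ← mul_assoc]
        exact pow_le_pow_right₀ one_le_two hexp

theorem exists_ne_zero_forall_isIntegral_intCast_mul (s : Finset K) :
    ∃ q : ℤ, q ≠ 0 ∧ ∀ x ∈ s, IsIntegral ℤ (q * x) := by
  have : Algebra.IsAlgebraic ℤ K :=
    (IsFractionRing.comap_isAlgebraic_iff (A := ℤ) (K := ℚ)).mpr inferInstance
  simpa only [zsmul_eq_mul] using Algebra.IsAlgebraic.exists_integral_multiples ℤ s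

theorem map_ne_rpow_map (ha₀ : 0 < ψ a) (ha₁ : ψ a ≠ 1) (hb : Irrational (ψ b)) :
    ψ c ≠ ψ a ^ ψ b := by
  intro hc
  classical
  obtain ⟨q, hq, hint⟩ := exists_ne_zero_forall_isIntegral_intCast_mul {a, b, c}
  obtain ⟨A, hA⟩ := ({1, |Real.log (ψ a)|, house a, house b, house c} : Finset ℝ).exists_le
  simp only [Finset.mem_insert, Finset.mem_singleton, forall_eq_or_imp, forall_eq] at hint hA
  obtain ⟨hqa, hqb, hqc⟩ := hint
  obtain ⟨hA, hlog, haA, hbA, hcA⟩ := hA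
  obtain ⟨n, hn, hlt⟩ := exists_factorial_mul_pow_lt_two_pow_choose_two
    (C := |(q : ℝ)| ^ 3 * (4 * A * Real.exp (4 * A ^ 2))) (by positivity) (Module.finrank ℚ K)
  have hcard : Fintype.card (Fin (n ^ 3) × Fin n) = n ^ 4 := by simp [pow_succ]
  have hle := two_pow_choose_two_le_of_schneiderMatrix (d := n ^ 3) (n := n) (H := n ^ 2)
    ha₀ ha₁ hb hc hA hlog haA hbA hcA hq hqa hqb hqc (Nat.one_le_pow _ _ hn)
    (pow_succ' n 2).ge (by rw [hcard, ← pow_mul])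
  rw [hcard, ← mul_assoc] at hle
  exact hlt.not_ge hle

end Schneider

/-- The **Gelfond–Schneider theorem** for a real base and a real exponent. -/
theorem two_rpow_sqrt_two_transcendental_general {α β : ℝ} (hα : IsAlgebraic ℚ α) (hα₀ : 0 < α)
    (hα₁ : α ≠ 1) (hβ : IsAlgebraic ℚ β) (hβ' : Irrational β) : Transcendental ℚ (α ^ β) := by
  intro hαβ
  let K := IntermediateField.adjoin ℚ {α, β, α ^ β}
  have : FiniteDimensional ℚ K := IntermediateField.finiteDimensional_adjoin <| by
    simp [hα.isIntegral, hβ.isIntegral, hαβ.isIntegral]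
  have : NumberField K := { }
  exact map_ne_rpow_map (ψ := algebraMap K ℝ)
    (a := ⟨α, IntermediateField.subset_adjoin ℚ _ (by simp)⟩)
    (b := ⟨β, IntermediateField.subset_adjoin ℚ _ (by simp)⟩)
    (c := ⟨α ^ β, IntermediateField.subset_adjoin ℚ _ (by simp)⟩) hα₀ hα₁ hβ' rfl

/-- `2 ^ √2` (real power) is transcendental over `ℚ`. -/
theorem two_rpow_sqrt_two_transcendental :
    Transcendental ℚ ((2 : ℝ) ^ Real.sqrt 2) :=
  have h₂ : IsAlgebraic ℚ (2 : ℝ) := isAlgebraic_natCast 2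
  two_rpow_sqrt_two_transcendental_general h₂ two_pos (by norm_num)
    (.of_pow two_pos (by rwa [Real.sq_sqrt two_pos.le])) irrational_sqrt_two
end

section
/- For all positive natural numbers m and n with m ≠ n, the real number log(m/n) (the natural logarithm of the rational number m/n) is transcendental over ℚ. -/
/-!
By the Hermite–Lindemann theorem `exp α` is transcendental for every algebraic `α ≠ 0`; apply this
to `α = log x` with `x` algebraic.

For a Galois number field `L ⊆ ℂ`, let `e ^ x` be the basis of the group ring `ℤ[L]`. It suffices
that the evaluation `∑ k_x e ^ x ↦ ∑ k_x exp x` is injective: it sends `e ^ α` to `exp α`, and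
`e ^ α` is transcendental over `ℤ`. Given `F ≠ 0` in its kernel, the product `N` of the Galois
conjugates of `F` is a nonzero Galois-invariant element of the kernel, because `ℤ[L]` is a domain.
If `N` has a nonzero coefficient at `x`, multiplying it by `∑ σ, e ^ (-σ x)` keeps it invariant and
in the kernel and makes the coefficient at `0` nonzero.

So let `k + ∑ c_x exp x = 0` be an invariant relation with `k ≠ 0` and all `x ≠ 0`. Hermite's
polynomials approximate all `exp x` simultaneously: `n exp x - p g(x)` is tiny, with `p` a large
prime not dividing `n`. By invariance `∑ c_x g(x)` is rational, hence an integer `z` after scaling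
by a power `a ^ s` of a common denominator. With `m = a ^ s n` the integer `m k + p z` still has
absolute value less than `1`, so it vanishes and `p ∣ m k`. For `p` larger than `|a|` and `|k|` this
is absurd.
-/

open Polynomial Finset
open scoped AddMonoidAlgebra

section

variable {R A ι : Type*} [CommRing R] [CommRing A] [Algebra R A]

theorem isIntegral_pow_smul_aeval {a : R} {x : A} (hx : IsIntegral R (a • x)) {g : R[X]} {N : ℕ}
    (hg : g.natDegree ≤ N) : IsIntegral R (a ^ N • aeval x g) := by
  rw [aeval_eq_sum_range' (Nat.lt_succ_of_le hg), smul_sum]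
  refine IsIntegral.sum _ fun i hi => ?_
  have hiN : N - i + i = N := Nat.sub_add_cancel (mem_range_succ_iff.mp hi)
  have hterm : a ^ N • g.coeff i • x ^ i = (a ^ (N - i) * g.coeff i) • (a • x) ^ i := by
    rw [_root_.smul_pow, smul_smul, smul_smul, mul_right_comm, ← pow_add, hiN]
  rw [hterm]
  exact (hx.pow i).smul _

theorem exists_eval_zero_ne_zero_forall_aeval_eq_zero [IsDomain R] {s : Finset ι} {β : ι → A}
    (halg : ∀ i ∈ s, IsAlgebraic R (β i)) (hβ : ∀ i ∈ s, β i ∈ nonZeroDivisors A) :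
    ∃ f : R[X], f.eval 0 ≠ 0 ∧ ∀ i ∈ s, aeval (β i) f = 0 := by
  choose! q hq0 hq using fun i hi =>
    (halg i hi).exists_nonzero_coeff_and_aeval_eq_zero (hβ i hi)
  refine ⟨∏ i ∈ s, q i, ?_, fun i hi => ?_⟩
  · rw [eval_prod, prod_ne_zero_iff]
    exact fun i hi => by simpa only [coeff_zero_eq_eval_zero] using hq0 i hi
  · rw [map_prod]
    exact prod_eq_zero hi (hq i hi)

end

theorem exists_intCast_eq_of_isIntegral_ratCast {K : Type*} [Field K] [CharZero K] {q : ℚ}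
    (hq : IsIntegral ℤ (q : K)) : ∃ z : ℤ, (z : K) = q := by
  rw [← eq_ratCast (algebraMap ℚ K), isIntegral_algebraMap_iff (algebraMap ℚ K).injective] at hq
  obtain ⟨z, rfl⟩ := IsIntegrallyClosed.isIntegral_iff.mp hq
  exact ⟨z, by simp⟩

theorem exists_intCast_eq_pow_mul_sum_aeval {K ι : Type*} [Field K] [CharZero K] {J : Finset ι}
    {c : ι → ℤ} {β : ι → K} {a : ℤ} (ha : ∀ i ∈ J, IsIntegral ℤ (a • β i)) {g : ℤ[X]} {q : ℚ}
    (hq : ∑ i ∈ J, (c i : K) * aeval (β i) g = q) {N : ℕ} (hg : g.natDegree ≤ N) :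
    ∃ z : ℤ, (z : K) = (a : K) ^ N * ∑ i ∈ J, (c i : K) * aeval (β i) g := by
  have hint : IsIntegral ℤ ((a : K) ^ N * ∑ i ∈ J, (c i : K) * aeval (β i) g) := by
    rw [mul_sum]
    refine IsIntegral.sum _ fun i hi => ?_
    simpa [mul_left_comm] using (isIntegral_pow_smul_aeval (ha i hi) hg).smul (c i)
  have hcast : (a : K) ^ N * ∑ i ∈ J, (c i : K) * aeval (β i) g = ((a ^ N * q : ℚ) : K) := by
    rw [hq]; push_cast; rfl
  rw [hcast] at hint ⊢
  exact exists_intCast_eq_of_isIntegral_ratCast hint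

theorem exists_prime_gt_mul_pow_div_factorial_lt_one (C x : ℝ) (B : ℕ) :
    ∃ p : ℕ, p.Prime ∧ B < p ∧ C * (x ^ p / (p - 1).factorial) < 1 := by
  have hlim := (FloorSemiring.tendsto_pow_div_factorial_atTop x).const_mul (C * x)
  rw [mul_zero] at hlim
  obtain ⟨N, hN⟩ := Filter.eventually_atTop.mp (hlim.eventually (gt_mem_nhds one_pos))
  obtain ⟨p, hp, hprime⟩ := Nat.exists_infinite_primes (N + B + 1)
  refine ⟨p, hprime, by omega, ?_⟩
  calc C * (x ^ p / (p - 1).factorial) = C * x * (x ^ (p - 1) / (p - 1).factorial) := by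
        rw [← mul_pow_sub_one hprime.ne_zero]; ring
    _ < 1 := hN (p - 1) (by omega)

theorem norm_pow_mul_sum_le {𝕜 ι : Type*} [NormedField 𝕜] {J : Finset ι} (c : ι → 𝕜) {w : ι → 𝕜}
    {E : ℝ} (hw : ∀ i ∈ J, ‖w i‖ ≤ E) (a : 𝕜) (N : ℕ) :
    ‖a ^ N * ∑ i ∈ J, c i * w i‖ ≤ ‖a‖ ^ N * ((∑ i ∈ J, ‖c i‖) * E) := by
  rw [norm_mul, norm_pow, sum_mul]
  gcongr
  refine norm_sum_le_of_le _ fun i hi => ?_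
  rw [norm_mul]
  exact mul_le_mul_of_nonneg_left (hw i hi) (norm_nonneg _)

theorem exists_prime_gt_norm_mul_sum_exp_sub_lt_one {ι : Type*} {J : Finset ι} {c : ι → ℤ}
    {β : ι → ℂ} (halg : ∀ i ∈ J, IsAlgebraic ℤ (β i)) (hβ : ∀ i ∈ J, β i ≠ 0)
    (hrat : ∀ g : ℤ[X], ∃ q : ℚ, ∑ i ∈ J, (c i : ℂ) * aeval (β i) g = q) (B : ℕ) :
    ∃ p : ℕ, p.Prime ∧ B < p ∧ ∃ m z : ℤ, ¬(p : ℤ) ∣ m ∧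
      ‖m * ∑ i ∈ J, (c i : ℂ) * Complex.exp (β i) - p * z‖ < 1 := by
  obtain ⟨f, hf0, hf⟩ := exists_eval_zero_ne_zero_forall_aeval_eq_zero halg
    fun i hi => mem_nonZeroDivisors_of_ne_zero (hβ i hi)
  have hf_ne : f ≠ 0 := by rintro rfl; simp at hf0
  set a := f.leadingCoeff
  set D := f.natDegree
  obtain ⟨b, hb⟩ := LindemannWeierstrass.exp_polynomial_approx f hf0
  obtain ⟨p, hp, hp_gt, hp_small⟩ := exists_prime_gt_mul_pow_div_factorial_lt_one
    (∑ i ∈ J, ‖(c i : ℂ)‖) (‖(a : ℂ)‖ ^ D * b) ((eval 0 f).natAbs + a.natAbs + B)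
  obtain ⟨n, hn, g, hg, hr⟩ := hb p (by omega) hp
  obtain ⟨q, hq⟩ := hrat g
  obtain ⟨z, hz⟩ := exists_intCast_eq_pow_mul_sum_aeval
    (fun i hi => isIntegral_leadingCoeff_smul f _ (hf i hi)) hq (hg.trans (Nat.sub_le _ _))
  refine ⟨p, hp, by omega, a ^ (p * D) * n, z, ?_, ?_⟩
  · have hp' : Prime (p : ℤ) := Nat.prime_iff_prime_int.mp hp
    have ha : ¬(p : ℤ) ∣ a := fun h => leadingCoeff_ne_zero.mpr hf_ne <|
      Int.eq_zero_of_dvd_of_natAbs_lt_natAbs h (by simp; omega)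
    exact hp'.not_dvd_mul (fun h => ha (hp'.dvd_of_dvd_pow h)) hn
  · have hfactor : ((a ^ (p * D) * n : ℤ) : ℂ) * ∑ i ∈ J, (c i : ℂ) * Complex.exp (β i) - p * z =
        (a : ℂ) ^ (p * D) *
          ∑ i ∈ J, (c i : ℂ) * (n • Complex.exp (β i) - p • aeval (β i) g) := by
      simp only [hz, zsmul_eq_mul, nsmul_eq_mul, mul_sub, sum_sub_distrib, mul_sum, Int.cast_mul,
        Int.cast_pow, mul_left_comm, mul_assoc, a, D]
    rw [hfactor]
    calc _ ≤ ‖(a : ℂ)‖ ^ (p * D) *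
            ((∑ i ∈ J, ‖(c i : ℂ)‖) * (b ^ p / (p - 1).factorial)) :=
          norm_pow_mul_sum_le _ (fun i hi => hr (mem_aroots.mpr ⟨hf_ne, hf i hi⟩)) _ (p * D)
      _ = (∑ i ∈ J, ‖(c i : ℂ)‖) * ((‖(a : ℂ)‖ ^ D * b) ^ p / (p - 1).factorial) := by
          rw [mul_pow, ← pow_mul, mul_comm D p]; ring
      _ < 1 := hp_small

theorem intCast_add_sum_mul_exp_ne_zero {ι : Type*} {J : Finset ι} {c : ι → ℤ} {β : ι → ℂ} {k : ℤ}
    (hk : k ≠ 0) (halg : ∀ i ∈ J, IsAlgebraic ℤ (β i)) (hβ : ∀ i ∈ J, β i ≠ 0)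
    (hrat : ∀ g : ℤ[X], ∃ q : ℚ, ∑ i ∈ J, (c i : ℂ) * aeval (β i) g = q) :
    (k : ℂ) + ∑ i ∈ J, (c i : ℂ) * Complex.exp (β i) ≠ 0 := by
  intro hsum
  obtain ⟨p, hp, hkp, m, z, hm, hlt⟩ :=
    exists_prime_gt_norm_mul_sum_exp_sub_lt_one halg hβ hrat k.natAbs
  have hcast : m * ∑ i ∈ J, (c i : ℂ) * Complex.exp (β i) - p * z =
      ((-(m * k + p * z) : ℤ) : ℂ) := by
    push_cast
    linear_combination (m : ℂ) * hsum
  rw [hcast, Complex.norm_intCast] at hlt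
  have hzero : -(m * k + p * z) = 0 := Int.abs_lt_one_iff.mp (by exact_mod_cast hlt)
  have hdvd : (p : ℤ) ∣ m * k := ⟨-z, by linarith⟩
  have hpk : (p : ℤ) ∣ k := ((Nat.prime_iff_prime_int.mp hp).dvd_or_dvd hdvd).resolve_left hm
  exact hk (Int.eq_zero_of_dvd_of_natAbs_lt_natAbs hpk (by simpa using hkp))

section GaloisAction

variable {K L : Type*} [Field K] [Field L] [Algebra K L]

/-- The automorphism of the group ring `ℤ[L]` induced by `σ ∈ Gal(L/K)`; it moves the exponents,
`e ^ x ↦ e ^ (σ x)`, and leaves the integer coefficients alone. -/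
noncomputable def galoisAct (σ : L ≃ₐ[K] L) : ℤ[L] ≃ₐ[ℤ] ℤ[L] :=
  AddMonoidAlgebra.domCongr ℤ ℤ (σ : L ≃+ L)

theorem galoisAct_single (σ : L ≃ₐ[K] L) (x : L) (k : ℤ) :
    galoisAct σ (.single x k) = .single (σ x) k :=
  AddMonoidAlgebra.domCongr_single ..

theorem galoisAct_one (F : ℤ[L]) : galoisAct (1 : L ≃ₐ[K] L) F = F :=
  DFunLike.congr_fun (AddMonoidAlgebra.domCongr_refl ..) F

theorem galoisAct_mul (σ τ : L ≃ₐ[K] L) (F : ℤ[L]) :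
    galoisAct (σ * τ) F = galoisAct σ (galoisAct τ F) := by
  ext x
  simp only [galoisAct, AddMonoidAlgebra.coeff_domCongr]
  rfl

theorem coeff_galoisAct_apply (σ : L ≃ₐ[K] L) (F : ℤ[L]) (x : L) :
    (galoisAct σ F).coeff (σ x) = F.coeff x := by
  simp [galoisAct]

variable [FiniteDimensional K L]

variable (K) in
/-- The product of the Galois conjugates of an element of the group ring `ℤ[L]`. -/
noncomputable def galoisNorm (F : ℤ[L]) : ℤ[L] := ∏ σ : L ≃ₐ[K] L, galoisAct σ F

theorem galoisAct_galoisNorm (τ : L ≃ₐ[K] L) (F : ℤ[L]) :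
    galoisAct τ (galoisNorm K F) = galoisNorm K F := by
  simp only [galoisNorm, map_prod, ← galoisAct_mul]
  exact Fintype.prod_equiv (Equiv.mulLeft τ) _ _ fun _ => rfl

theorem galoisNorm_ne_zero [CharZero L] {F : ℤ[L]} (hF : F ≠ 0) : galoisNorm K F ≠ 0 :=
  prod_ne_zero_iff.mpr fun σ _ => by simpa using hF

theorem dvd_galoisNorm (F : ℤ[L]) : F ∣ galoisNorm K F := by
  conv_lhs => rw [← galoisAct_one (K := K) F]
  exact dvd_prod_of_mem (fun σ : L ≃ₐ[K] L => galoisAct σ F) (mem_univ 1)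

variable (K) in
/-- The sum of `e ^ (σ x)` over `σ ∈ Gal(L/K)` in the group ring `ℤ[L]`, so that a conjugate
occurs with the order of its stabilizer as multiplicity. -/
noncomputable def orbitSum (x : L) : ℤ[L] := ∑ σ : L ≃ₐ[K] L, .single (σ x) 1

theorem galoisAct_orbitSum (τ : L ≃ₐ[K] L) (x : L) :
    galoisAct τ (orbitSum K x) = orbitSum K x := by
  simp only [orbitSum, map_sum, galoisAct_single]
  exact Fintype.sum_equiv (Equiv.mulLeft τ) _ _ fun _ => rfl

theorem coeff_zero_mul_orbitSum_neg {F : ℤ[L]} (hF : ∀ σ : L ≃ₐ[K] L, galoisAct σ F = F) (x : L) :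
    (F * orbitSum K (-x)).coeff 0 = Nat.card (L ≃ₐ[K] L) * F.coeff x := by
  have hterm (σ : L ≃ₐ[K] L) : (F * .single (σ (-x)) 1).coeff 0 = F.coeff x := by
    rw [AddMonoidAlgebra.coeff_mul_single_eq_coeff_mul (σ x) fun y _ => by
      rw [map_neg, ← sub_eq_add_neg, sub_eq_zero], mul_one, ← coeff_galoisAct_apply σ F x, hF σ]
  simp [-map_neg, orbitSum, mul_sum, AddMonoidAlgebra.coeff_sum, hterm]

end GaloisAction

section ExpEval

variable {L : Type*} [Field L]

/-- Evaluation `∑ k_x e ^ x ↦ ∑ k_x exp (φ x)` of the group ring `ℤ[L]` along an embedding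
`φ : L → ℂ`; its injectivity is the Lindemann–Weierstrass theorem for `L`. -/
noncomputable def expEval (φ : L →+* ℂ) : ℤ[L] →ₐ[ℤ] ℂ :=
  AddMonoidAlgebra.lift ℤ ℂ L
    (Complex.expMonoidHom.comp (AddMonoidHom.toMultiplicative (φ : L →+ ℂ)))

theorem expEval_single (φ : L →+* ℂ) (x : L) (k : ℤ) :
    expEval φ (.single x k) = k * Complex.exp (φ x) := by
  simp [expEval, Complex.expMonoidHom]

theorem expEval_eq_coeff_zero_add_sum [DecidableEq L] (φ : L →+* ℂ) (F : ℤ[L]) :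
    expEval φ F = F.coeff 0 + ∑ x ∈ F.coeff.support.erase 0, F.coeff x * Complex.exp (φ x) := by
  have hsum : expEval φ F = F.coeff.sum fun x k => k * Complex.exp (φ x) := by
    simp [expEval, AddMonoidAlgebra.lift_apply, Complex.expMonoidHom]
  rw [hsum, Finsupp.sum]
  by_cases h : 0 ∈ F.coeff.support
  · rw [← add_sum_erase _ _ h]; simp
  · rw [erase_eq_of_notMem h, Finsupp.notMem_support_iff.mp h]; simp

variable [NumberField L] [IsGalois ℚ L]

theorem exists_ratCast_eq_sum_aeval {J : Finset L} {c : L → ℤ}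
    (hJ : ∀ (σ : L ≃ₐ[ℚ] L) (x : L), σ x ∈ J ↔ x ∈ J)
    (hc : ∀ (σ : L ≃ₐ[ℚ] L) (x : L), c (σ x) = c x) (g : ℤ[X]) :
    ∃ q : ℚ, ∑ x ∈ J, (c x : L) * aeval x g = q := by
  suffices h : ∑ x ∈ J, (c x : L) * aeval x g ∈ Set.range (algebraMap ℚ L) by
    obtain ⟨q, hq⟩ := h
    exact ⟨q, by simp [← hq]⟩
  refine (IsGalois.mem_range_algebraMap_iff_fixed _).mpr fun σ => ?_
  rw [map_sum]
  refine sum_equiv σ.toEquiv (fun x => (hJ σ x).symm) fun x _ => ?_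
  have haeval : aeval (σ x) g = σ (aeval x g) :=
    aeval_algHom_apply ((σ : L →ₐ[ℚ] L).restrictScalars ℤ) x g
  simp [hc, haeval]

theorem expEval_ne_zero_of_galoisAct_eq (φ : L →+* ℂ) {F : ℤ[L]}
    (hF : ∀ σ : L ≃ₐ[ℚ] L, galoisAct σ F = F) (hF0 : F.coeff 0 ≠ 0) : expEval φ F ≠ 0 := by
  classical
  have hcoeff (σ : L ≃ₐ[ℚ] L) (x : L) : F.coeff (σ x) = F.coeff x := by
    rw [← coeff_galoisAct_apply σ F x, hF σ]
  rw [expEval_eq_coeff_zero_add_sum]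
  refine intCast_add_sum_mul_exp_ne_zero hF0 (fun x _ => ?_) (fun x hx => ?_) fun g => ?_
  · have hx : IsAlgebraic ℤ x :=
      (IsFractionRing.isAlgebraic_iff ℤ ℚ L).mpr (Algebra.IsAlgebraic.isAlgebraic x)
    exact hx.algHom φ.toIntAlgHom
  · simpa using ne_of_mem_erase hx
  · obtain ⟨q, hq⟩ := exists_ratCast_eq_sum_aeval (J := F.coeff.support.erase 0)
      (by simp [hcoeff]) hcoeff g
    have haeval (x : L) : aeval (φ x) g = φ (aeval x g) := aeval_algHom_apply φ.toIntAlgHom x g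
    exact ⟨q, by simpa [haeval] using congrArg φ hq⟩

theorem expEval_injective (φ : L →+* ℂ) : Function.Injective (expEval φ) := by
  refine (injective_iff_map_eq_zero _).mpr fun F hF => ?_
  by_contra hF_ne
  set N := galoisNorm ℚ F
  have hN_eval : expEval φ N = 0 :=
    eq_zero_of_zero_dvd (hF ▸ map_dvd (expEval φ) (dvd_galoisNorm F))
  have hN_ne : N ≠ 0 := galoisNorm_ne_zero hF_ne
  obtain ⟨x, hx⟩ : ∃ x, N.coeff x ≠ 0 := by
    contrapose! hN_ne
    ext x
    simpa using hN_ne x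
  refine expEval_ne_zero_of_galoisAct_eq φ (F := N * orbitSum ℚ (-x)) (fun σ => ?_) ?_ ?_
  · rw [map_mul, galoisAct_galoisNorm, galoisAct_orbitSum]
  · rw [coeff_zero_mul_orbitSum_neg fun σ => galoisAct_galoisNorm σ F]
    exact mul_ne_zero (Nat.cast_ne_zero.mpr Nat.card_pos.ne') hx
  · rw [map_mul, hN_eval, zero_mul]

end ExpEval

theorem transcendental_single {R M : Type*} [CommRing R] [AddCancelCommMonoid M] {x : M}
    (hx : ¬IsOfFinAddOrder x) : Transcendental R (AddMonoidAlgebra.single x 1 : R[M]) := by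
  classical
  refine transcendental_iff.mpr fun q hq => ?_
  ext k
  have hinj (n : ℕ) : n • x = k • x ↔ n = k :=
    (injective_nsmul_iff_not_isOfFinAddOrder.mpr hx).eq_iff
  have hcoeff := congrArg (fun F : R[M] => F.coeff (k • x)) hq
  simpa [aeval_def, eval₂_eq_sum, sum_def, ← Algebra.smul_def, AddMonoidAlgebra.single_pow,
    AddMonoidAlgebra.coeff_sum, Finsupp.single_apply, hinj] using hcoeff

theorem exists_isGalois_finiteDimensional_mem {F E : Type*} [Field F] [Field E] [Algebra F E]
    [IsSepClosed E] {x : E} (hx : IsSeparable F x) :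
    ∃ L : IntermediateField F E, FiniteDimensional F L ∧ IsGalois F L ∧ x ∈ L := by
  set L := IntermediateField.adjoin F ((minpoly F x).rootSet E)
  have hsplit : (minpoly F x).IsSplittingField F L :=
    IntermediateField.adjoin_rootSet_isSplittingField (IsSepClosed.splits_codomain _ hx)
  refine ⟨L, IsSplittingField.finiteDimensional L (minpoly F x),
    IsGalois.of_separable_splitting_field hx, IntermediateField.subset_adjoin _ _ ?_⟩
  exact mem_rootSet.mpr ⟨minpoly.ne_zero hx.isIntegral, minpoly.aeval F x⟩

theorem transcendental_exp {α : ℂ} (halg : IsAlgebraic ℚ α) (hα : α ≠ 0) :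
    Transcendental ℚ (Complex.exp α) := by
  obtain ⟨L, hfin, hgal, hαL⟩ :=
    exists_isGalois_finiteDimensional_mem (minpoly.irreducible halg.isIntegral).separable
  have : NumberField L := { to_finiteDimensional := hfin }
  -- The subfield and number-field `ℚ`-algebra structures on `L` agree only propositionally.
  have : IsGalois ℚ L := by convert hgal; exact Subsingleton.elim _ _
  have hx : (⟨α, hαL⟩ : L) ≠ 0 := fun h => hα (congrArg Subtype.val h)
  have hexp : expEval (algebraMap L ℂ) (.single ⟨α, hαL⟩ 1) = Complex.exp α := by
    rw [expEval_single, Int.cast_one, one_mul]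
    rfl
  rw [Transcendental, ← IsFractionRing.isAlgebraic_iff ℤ ℚ ℂ, ← hexp,
    isAlgebraic_algHom_iff _ (expEval_injective _)]
  exact transcendental_single (not_isOfFinAddOrder_of_isAddTorsionFree hx)

theorem log_rat_transcendental_general {x : ℝ} (halg : IsAlgebraic ℚ x) (hpos : 0 < x)
    (hne : x ≠ 1) : Transcendental ℚ (Real.log x) := by
  intro hlog
  have hlog_ne : (Real.log x : ℂ) ≠ 0 :=
    Complex.ofReal_ne_zero.mpr (Real.log_ne_zero_of_pos_of_ne_one hpos hne)
  refine transcendental_exp (hlog.algebraMap (A := ℂ)) hlog_ne ?_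
  rw [Complex.coe_algebraMap, ← Complex.ofReal_exp, Real.exp_log hpos]
  exact halg.algebraMap

/-- For positive naturals `m ≠ n`, the real number `log (m / n)` is
transcendental over `ℚ`. -/
theorem log_rat_transcendental (m n : ℕ) (hm : 0 < m) (hn : 0 < n) (hmn : m ≠ n) :
    Transcendental ℚ (Real.log ((m : ℝ) / (n : ℝ))) :=
  log_rat_transcendental_general (by simpa using isAlgebraic_algebraMap (A := ℝ) (m / n : ℚ))
    (by positivity) (by rw [Ne, div_eq_one_iff_eq (by positivity)]; exact_mod_cast hmn)
end
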